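/- There exists a finite matroid M such that M satisfies the 5th Kinser inequality for every family of five subsets of its ground set, but the dual matroid M* violates the 5th Kinser inequality for some family of five subsets of its ground set. Consequently K_5 ≠ K_5*, i.e. the Kinser class K_5 is not closed under duality. -/

import Mathlib

open Finset

universe u v

namespace Matroid

variable {α : Type*}

/-- The rank of a set in a matroid: the cardinality of a largest independent subset. -/
noncomputable def rnk (M : Matroid α) (X : Set α) : ℕ :=
  sSup {n : ℕ | ∃ I, M.Indep I ∧ I ⊆ X ∧ I.ncard = n}

/-- The `n`-th Kinser inequality for the family `X 1, …, X n`. -/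
def KinserIneq (M : Matroid α) (n : ℕ) (X : ℕ → Set α) : Prop :=
  (∑ i ∈ Finset.Icc 3 n, M.rnk (X i)) + M.rnk (X 1 ∪ X 2) + M.rnk (X 1 ∪ X 3 ∪ X n)
      + ∑ i ∈ Finset.Icc 4 n, M.rnk (X 2 ∪ X (i - 1) ∪ X i)
    ≤ M.rnk (X 1 ∪ X 3) + M.rnk (X 1 ∪ X n)
      + (∑ i ∈ Finset.Icc 3 n, M.rnk (X 2 ∪ X i))
      + ∑ i ∈ Finset.Icc 4 n, M.rnk (X (i - 1) ∪ X i)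

/-- `M` lies in the Kinser class `K n`: the `n`-th Kinser inequality holds for every
family of `n` subsets of the ground set. -/
def MemKinserClass (M : Matroid α) (n : ℕ) : Prop :=
  ∀ X : ℕ → Set α, (∀ i ∈ Finset.Icc 1 n, X i ⊆ M.E) → M.KinserIneq n X

/-- `M` is (isomorphic to) the matroid of linear dependence of a family of vectors of a
vector space over `𝔽`. -/
def IsRepOver {α : Type u} (M : Matroid α) (𝔽 : Type v) [Field 𝔽] : Prop :=
  ∃ (W : Type (max u v)) (_ : AddCommGroup W) (_ : Module 𝔽 W) (φ : α → W),
    ∀ I : Set α, M.Indep I ↔ I ⊆ M.E ∧ LinearIndependent 𝔽 (fun x : I => φ x.1)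

/-- Deletion of a set of elements from a matroid. -/
def del (M : Matroid α) (D : Set α) : Matroid α := M ↾ (M.E \ D)

/-- Contraction of a set of elements in a matroid. -/
def con (M : Matroid α) (C : Set α) : Matroid α := (M✶ ↾ (M✶.E \ C))✶

/-- `N` is a minor of `M`: it is obtained from `M` by contractions and deletions. -/
def IsMinorOf (N M : Matroid α) : Prop :=
  ∃ C D : Set α, C ⊆ M.E ∧ D ⊆ M.E ∧ Disjoint C D ∧ N = (M.con C).del D

/-- `N` is a proper minor of `M`: at least one element is deleted or contracted. -/
def IsProperMinorOf (N M : Matroid α) : Prop :=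
  ∃ C D : Set α, C ⊆ M.E ∧ D ⊆ M.E ∧ Disjoint C D ∧ (C ∪ D).Nonempty ∧
    N = (M.con C).del D

/-- A matroid isomorphism: a bijection of ground sets preserving independence. -/
def IsIsoTo {β : Type*} (M : Matroid α) (N : Matroid β) : Prop :=
  ∃ f : α → β, Set.BijOn f M.E N.E ∧ ∀ I ⊆ M.E, (M.Indep I ↔ N.Indep (f '' I))

/-- The Ingleton inequality (the 4th Kinser inequality) for four subsets. -/
def IngletonIneq (M : Matroid α) (X₁ X₂ X₃ X₄ : Set α) : Prop :=
  M.rnk X₃ + M.rnk X₄ + M.rnk (X₁ ∪ X₂) + M.rnk (X₁ ∪ X₃ ∪ X₄) + M.rnk (X₂ ∪ X₃ ∪ X₄)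
    ≤ M.rnk (X₁ ∪ X₃) + M.rnk (X₁ ∪ X₄) + M.rnk (X₂ ∪ X₃) + M.rnk (X₂ ∪ X₄)
      + M.rnk (X₃ ∪ X₄)

end Matroid

/-!
In a sparse paving matroid, two sets whose union is not spanning form a modular pair unless their
union is a circuit-hyperplane. A violation of the Ingleton inequality or of the fifth Kinser
inequality does not leave room for modular pairs, so it makes certain unions `Xᵢ ∪ Xⱼ`
circuit-hyperplanes and prescribes how these meet.

The matroid `Kin(5)⁻` violates the inequality: its circuit-hyperplanes are the seven unions
`Xᵢ ∪ Xⱼ` on the right-hand side, while `X₁ ∪ X₂` has been relaxed to a basis. In the dual, the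
incidences between circuit-hyperplanes rule out violations of the Ingleton inequality. Those
required by a violation of the fifth Kinser inequality do occur, but only in configurations that
force `X₁ ∪ X₃` and `X₁ ∪ X₅` to be circuit-hyperplanes too, and then `X₁ ∪ X₂` is one as well,
which restores the inequality.
-/

namespace Matroid

section Rank

variable {α : Type*} (M : Matroid α) [M.RankFinite]

theorem cast_rnk (X : Set α) : (M.rnk X : ℕ∞) = M.eRk X := by
  obtain ⟨I, hI⟩ := M.exists_isBasis' X
  have hgreatest : IsGreatest {n | ∃ J, M.Indep J ∧ J ⊆ X ∧ J.ncard = n} I.ncard := by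
    refine ⟨⟨I, hI.indep, hI.subset, rfl⟩, ?_⟩
    rintro _ ⟨J, hJ, hJX, rfl⟩
    have hle : J.encard ≤ I.encard := hI.encard_eq_eRk ▸ hJ.encard_le_eRk_of_subset hJX
    rwa [← hJ.finite.cast_ncard_eq, ← hI.indep.finite.cast_ncard_eq, Nat.cast_le] at hle
  rw [rnk, hgreatest.csSup_eq, hI.indep.finite.cast_ncard_eq, hI.encard_eq_eRk]

variable {M} in
theorem rnk_coe_of_indep {I : Finset α} (hI : M.Indep I) : M.rnk I = #I := by
  rw [← Nat.cast_inj (R := ℕ∞), cast_rnk, hI.eRk_eq_encard, Set.encard_coe_eq_coe_finsetCard]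

theorem rnk_mono {X Y : Set α} (h : X ⊆ Y := by grind) : M.rnk X ≤ M.rnk Y := by
  rw [← Nat.cast_le (α := ℕ∞), cast_rnk, cast_rnk]
  exact M.eRk_mono h

theorem rnk_add_rnk_le (X Y I U : Set α) (hIX : I ⊆ X := by grind) (hIY : I ⊆ Y := by grind)
    (hU : U ⊆ X ∪ Y := by grind) : M.rnk I + M.rnk U ≤ M.rnk X + M.rnk Y := by
  have h := M.eRk_inter_add_eRk_union_le X Y
  simp only [← cast_rnk, ← Nat.cast_add, Nat.cast_le] at h
  exact (add_le_add (M.rnk_mono (Set.subset_inter hIX hIY)) (M.rnk_mono hU)).trans h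

end Rank

section ModularPair

variable {α : Type*}

/-- Two sets form a modular pair when they attain equality in the submodular inequality. In a
sparse paving matroid this is the typical relation between two sets with nonspanning union. -/
def IsModularPair (M : Matroid α) (X Y : Set α) : Prop :=
  M.rnk X + M.rnk Y = M.rnk (X ∪ Y) + M.rnk (X ∩ Y)

end ModularPair

section Ingleton

variable {α : Type*} {M : Matroid α} {X₁ X₂ X₃ X₄ : Set α}

/-- An Ingleton matroid: the Ingleton inequality holds for all quadruples of sets. -/
def IsIngleton (M : Matroid α) : Prop :=
  ∀ X₁ X₂ X₃ X₄ : Set α, M.IngletonIneq X₁ X₂ X₃ X₄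

theorem IngletonIneq.swap_left (h : M.IngletonIneq X₂ X₁ X₃ X₄) :
    M.IngletonIneq X₁ X₂ X₃ X₄ := by
  unfold IngletonIneq at h ⊢
  rw [Set.union_comm X₂ X₁] at h
  omega

theorem IngletonIneq.swap_right (h : M.IngletonIneq X₁ X₂ X₄ X₃) :
    M.IngletonIneq X₁ X₂ X₃ X₄ := by
  unfold IngletonIneq at h ⊢
  rw [Set.union_comm X₄ X₃, Set.union_right_comm X₁ X₄ X₃, Set.union_right_comm X₂ X₄ X₃] at h
  omega

variable [M.RankFinite]

theorem ingletonIneq_of_rnk₁₃₄_le_rnk₁₃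
    (h : M.rnk (X₁ ∪ X₃ ∪ X₄) ≤ M.rnk (X₁ ∪ X₃)) : M.IngletonIneq X₁ X₂ X₃ X₄ := by
  have := M.rnk_add_rnk_le (X₁ ∪ X₄) (X₂ ∪ X₄) X₄ (X₁ ∪ X₂)
  have := M.rnk_add_rnk_le (X₂ ∪ X₃) (X₃ ∪ X₄) X₃ (X₂ ∪ X₃ ∪ X₄)
  unfold IngletonIneq
  omega

theorem ingletonIneq_of_rnk₁₂₃₄_le_rnk₃₄
    (h : M.rnk (X₁ ∪ X₂ ∪ X₃ ∪ X₄) ≤ M.rnk (X₃ ∪ X₄)) : M.IngletonIneq X₁ X₂ X₃ X₄ := by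
  have := M.rnk_add_rnk_le (X₁ ∪ X₃) (X₂ ∪ X₃) X₃ (X₁ ∪ X₂ ∪ X₃)
  have := M.rnk_add_rnk_le (X₁ ∪ X₄) (X₂ ∪ X₄) X₄ (X₁ ∪ X₂ ∪ X₄)
  have := M.rnk_add_rnk_le (X₁ ∪ X₂ ∪ X₃) (X₁ ∪ X₂ ∪ X₄) (X₁ ∪ X₂) (X₁ ∪ X₂ ∪ X₃ ∪ X₄)
  have := M.rnk_mono (X := X₁ ∪ X₃ ∪ X₄) (Y := X₁ ∪ X₂ ∪ X₃ ∪ X₄)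
  have := M.rnk_mono (X := X₂ ∪ X₃ ∪ X₄) (Y := X₁ ∪ X₂ ∪ X₃ ∪ X₄)
  unfold IngletonIneq
  omega

theorem IsModularPair.ingletonIneq₃₄ (h : M.IsModularPair X₃ X₄) :
    M.IngletonIneq X₁ X₂ X₃ X₄ := by
  have := M.rnk_add_rnk_le (X₁ ∪ X₃) (X₁ ∪ X₄) (X₁ ∪ (X₃ ∩ X₄)) (X₁ ∪ X₃ ∪ X₄)
  have := M.rnk_add_rnk_le (X₂ ∪ X₃) (X₂ ∪ X₄) (X₂ ∪ (X₃ ∩ X₄)) (X₂ ∪ X₃ ∪ X₄)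
  have := M.rnk_add_rnk_le (X₁ ∪ (X₃ ∩ X₄)) (X₂ ∪ (X₃ ∩ X₄)) (X₃ ∩ X₄) (X₁ ∪ X₂)
  unfold IsModularPair at h
  unfold IngletonIneq
  omega

theorem IsModularPair.ingletonIneq₁₃ (h : M.IsModularPair X₁ X₃) :
    M.IngletonIneq X₁ X₂ X₃ X₄ := by
  have := M.rnk_add_rnk_le (X₁ ∪ X₄) (X₃ ∪ X₄) (X₄ ∪ (X₁ ∩ X₃)) (X₁ ∪ X₃ ∪ X₄)
  have := M.rnk_add_rnk_le (X₂ ∪ X₄) (X₄ ∪ (X₁ ∩ X₃)) X₄ (X₂ ∪ X₄ ∪ (X₁ ∩ X₃))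
  have := M.rnk_add_rnk_le (X₂ ∪ X₄ ∪ (X₁ ∩ X₃)) (X₂ ∪ X₃) (X₂ ∪ (X₁ ∩ X₃)) (X₂ ∪ X₃ ∪ X₄)
  have := M.rnk_add_rnk_le (X₂ ∪ (X₁ ∩ X₃)) X₁ (X₁ ∩ X₃) (X₁ ∪ X₂)
  unfold IsModularPair at h
  unfold IngletonIneq
  omega

end Ingleton

section KinserFive

variable {α : Type*} {M : Matroid α} {X₁ X₂ X₃ X₄ X₅ : Set α}

/-- The fifth Kinser inequality for five given sets, with the sums in `KinserIneq` written out. -/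
def KinserFiveIneq (M : Matroid α) (X₁ X₂ X₃ X₄ X₅ : Set α) : Prop :=
  M.rnk X₃ + M.rnk X₄ + M.rnk X₅ + M.rnk (X₁ ∪ X₂) + M.rnk (X₁ ∪ X₃ ∪ X₅)
      + M.rnk (X₂ ∪ X₃ ∪ X₄) + M.rnk (X₂ ∪ X₄ ∪ X₅)
    ≤ M.rnk (X₁ ∪ X₃) + M.rnk (X₁ ∪ X₅) + M.rnk (X₂ ∪ X₃) + M.rnk (X₂ ∪ X₄) + M.rnk (X₂ ∪ X₅)
      + M.rnk (X₃ ∪ X₄) + M.rnk (X₄ ∪ X₅)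

theorem kinserIneq_five_iff (X : ℕ → Set α) :
    M.KinserIneq 5 X ↔ M.KinserFiveIneq (X 1) (X 2) (X 3) (X 4) (X 5) := by
  simp only [KinserIneq, KinserFiveIneq, Nat.reduceLeDiff, sum_Icc_succ_top, Icc_self,
    sum_singleton, Nat.reduceSub, add_assoc]

theorem KinserFiveIneq.reverse (h : M.KinserFiveIneq X₁ X₂ X₅ X₄ X₃) :
    M.KinserFiveIneq X₁ X₂ X₃ X₄ X₅ := by
  unfold KinserFiveIneq at h ⊢
  rw [Set.union_comm X₅ X₄, Set.union_comm X₄ X₃, Set.union_right_comm X₁ X₅ X₃,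
    Set.union_right_comm X₂ X₅ X₄, Set.union_right_comm X₂ X₄ X₃] at h
  omega

variable [M.RankFinite]

theorem kinserFiveIneq_of_rnk₁₃₅_le_rnk₁₃ (h : M.rnk (X₁ ∪ X₃ ∪ X₅) ≤ M.rnk (X₁ ∪ X₃)) :
    M.KinserFiveIneq X₁ X₂ X₃ X₄ X₅ := by
  have := M.rnk_add_rnk_le (X₁ ∪ X₅) (X₂ ∪ X₅) X₅ (X₁ ∪ X₂)
  have := M.rnk_add_rnk_le (X₂ ∪ X₃) (X₃ ∪ X₄) X₃ (X₂ ∪ X₃ ∪ X₄)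
  have := M.rnk_add_rnk_le (X₂ ∪ X₄) (X₄ ∪ X₅) X₄ (X₂ ∪ X₄ ∪ X₅)
  unfold KinserFiveIneq
  omega

theorem kinserFiveIneq_of_rnk₂₃₄_le_rnk₃₄ (h : M.rnk (X₂ ∪ X₃ ∪ X₄) ≤ M.rnk (X₃ ∪ X₄)) :
    M.KinserFiveIneq X₁ X₂ X₃ X₄ X₅ := by
  have := M.rnk_add_rnk_le (X₁ ∪ X₃) (X₂ ∪ X₃) X₃ (X₁ ∪ X₂ ∪ X₃)
  have := M.rnk_add_rnk_le (X₁ ∪ X₅) (X₂ ∪ X₅) X₅ (X₁ ∪ X₂ ∪ X₅)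
  have := M.rnk_add_rnk_le (X₁ ∪ X₂ ∪ X₃) (X₁ ∪ X₂ ∪ X₅) (X₁ ∪ X₂) (X₁ ∪ X₃ ∪ X₅)
  have := M.rnk_add_rnk_le (X₂ ∪ X₄) (X₄ ∪ X₅) X₄ (X₂ ∪ X₄ ∪ X₅)
  unfold KinserFiveIneq
  omega

theorem kinserFiveIneq_of_rnk₂₃₄_le_rnk₂₃ (hI : M.IngletonIneq X₁ X₂ X₄ X₅)
    (h : M.rnk (X₂ ∪ X₃ ∪ X₄) ≤ M.rnk (X₂ ∪ X₃)) : M.KinserFiveIneq X₁ X₂ X₃ X₄ X₅ := by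
  have := M.rnk_add_rnk_le (X₁ ∪ X₃) (X₃ ∪ X₄) X₃ (X₁ ∪ X₃ ∪ X₄)
  have := M.rnk_add_rnk_le (X₁ ∪ X₃ ∪ X₄) (X₁ ∪ X₄ ∪ X₅) (X₁ ∪ X₄) (X₁ ∪ X₃ ∪ X₅)
  unfold IngletonIneq at hI
  unfold KinserFiveIneq
  omega

theorem kinserFiveIneq_of_rnk₃₄₅_le_rnk₃₄ (hI : M.IngletonIneq X₁ X₂ X₃ X₅)
    (h : M.rnk (X₃ ∪ X₄ ∪ X₅) ≤ M.rnk (X₃ ∪ X₄)) : M.KinserFiveIneq X₁ X₂ X₃ X₄ X₅ := by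
  have := M.rnk_add_rnk_le (X₂ ∪ X₄) (X₄ ∪ X₅) X₄ (X₂ ∪ X₄ ∪ X₅)
  have := M.rnk_add_rnk_le (X₂ ∪ X₃ ∪ X₅) (X₃ ∪ X₄ ∪ X₅) (X₃ ∪ X₅) (X₂ ∪ X₃ ∪ X₄)
  unfold IngletonIneq at hI
  unfold KinserFiveIneq
  omega

theorem kinserFiveIneq_of_rnk₂₃₄₅_le_rnk₂₄ (hI : M.IngletonIneq X₁ X₂ X₃ X₅)
    (h : M.rnk (X₂ ∪ X₃ ∪ X₄ ∪ X₅) ≤ M.rnk (X₂ ∪ X₄)) : M.KinserFiveIneq X₁ X₂ X₃ X₄ X₅ := by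
  have := M.rnk_add_rnk_le (X₃ ∪ X₄) (X₄ ∪ X₅) X₄ (X₃ ∪ X₄ ∪ X₅)
  have := M.rnk_add_rnk_le (X₃ ∪ X₄ ∪ X₅) (X₂ ∪ X₃ ∪ X₅) (X₃ ∪ X₅) (X₂ ∪ X₃ ∪ X₄ ∪ X₅)
  have := M.rnk_mono (X := X₂ ∪ X₃ ∪ X₄) (Y := X₂ ∪ X₃ ∪ X₄ ∪ X₅)
  have := M.rnk_mono (X := X₂ ∪ X₄ ∪ X₅) (Y := X₂ ∪ X₃ ∪ X₄ ∪ X₅)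
  unfold IngletonIneq at hI
  unfold KinserFiveIneq
  omega

theorem IsModularPair.kinserFiveIneq₃₄ (hI : M.IngletonIneq X₁ X₂ (X₃ ∩ X₄) X₅)
    (h : M.IsModularPair X₃ X₄) : M.KinserFiveIneq X₁ X₂ X₃ X₄ X₅ := by
  have := M.rnk_add_rnk_le (X₂ ∪ X₃) (X₂ ∪ X₄) (X₂ ∪ (X₃ ∩ X₄)) (X₂ ∪ X₃ ∪ X₄)
  have := M.rnk_add_rnk_le (X₁ ∪ X₃) (X₁ ∪ (X₃ ∩ X₄) ∪ X₅) (X₁ ∪ (X₃ ∩ X₄)) (X₁ ∪ X₃ ∪ X₅)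
  have := M.rnk_add_rnk_le (X₄ ∪ X₅) (X₂ ∪ (X₃ ∩ X₄) ∪ X₅) ((X₃ ∩ X₄) ∪ X₅) (X₂ ∪ X₄ ∪ X₅)
  unfold IsModularPair at h
  unfold IngletonIneq at hI
  unfold KinserFiveIneq
  omega

theorem IsModularPair.kinserFiveIneq₂₃ (h : M.IsModularPair X₂ X₃) :
    M.KinserFiveIneq X₁ X₂ X₃ X₄ X₅ := by
  have := M.rnk_add_rnk_le (X₂ ∪ X₄) (X₃ ∪ X₄) (X₄ ∪ (X₂ ∩ X₃)) (X₂ ∪ X₃ ∪ X₄)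
  have := M.rnk_add_rnk_le (X₄ ∪ X₅) (X₄ ∪ (X₂ ∩ X₃)) X₄ (X₄ ∪ X₅ ∪ (X₂ ∩ X₃))
  have := M.rnk_add_rnk_le (X₄ ∪ X₅ ∪ (X₂ ∩ X₃)) (X₂ ∪ X₅) (X₅ ∪ (X₂ ∩ X₃)) (X₂ ∪ X₄ ∪ X₅)
  have := M.rnk_add_rnk_le (X₁ ∪ X₅) (X₅ ∪ (X₂ ∩ X₃)) X₅ (X₁ ∪ X₅ ∪ (X₂ ∩ X₃))
  have := M.rnk_add_rnk_le (X₁ ∪ X₅ ∪ (X₂ ∩ X₃)) (X₁ ∪ X₃) (X₁ ∪ (X₂ ∩ X₃)) (X₁ ∪ X₃ ∪ X₅)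
  have := M.rnk_add_rnk_le (X₁ ∪ (X₂ ∩ X₃)) X₂ (X₂ ∩ X₃) (X₁ ∪ X₂)
  unfold IsModularPair at h
  unfold KinserFiveIneq
  omega

theorem IsModularPair.kinserFiveIneq₂₄ (h : M.IsModularPair X₂ X₄) :
    M.KinserFiveIneq X₁ X₂ X₃ X₄ X₅ := by
  have := M.rnk_add_rnk_le (X₂ ∪ X₃) (X₃ ∪ X₄) (X₃ ∪ (X₂ ∩ X₄)) (X₂ ∪ X₃ ∪ X₄)
  have := M.rnk_add_rnk_le (X₂ ∪ X₅) (X₄ ∪ X₅) (X₅ ∪ (X₂ ∩ X₄)) (X₂ ∪ X₄ ∪ X₅)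
  have := M.rnk_add_rnk_le (X₁ ∪ X₃) (X₃ ∪ (X₂ ∩ X₄)) X₃ (X₁ ∪ X₃ ∪ (X₂ ∩ X₄))
  have := M.rnk_add_rnk_le (X₁ ∪ X₅) (X₅ ∪ (X₂ ∩ X₄)) X₅ (X₁ ∪ X₅ ∪ (X₂ ∩ X₄))
  have := M.rnk_add_rnk_le (X₁ ∪ X₃ ∪ (X₂ ∩ X₄)) (X₁ ∪ X₅ ∪ (X₂ ∩ X₄)) (X₁ ∪ (X₂ ∩ X₄))
    (X₁ ∪ X₃ ∪ X₅)
  have := M.rnk_add_rnk_le (X₁ ∪ (X₂ ∩ X₄)) X₂ (X₂ ∩ X₄) (X₁ ∪ X₂)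
  unfold IsModularPair at h
  unfold KinserFiveIneq
  omega

end KinserFive

section SparsePaving

variable {α : Type*} [DecidableEq α] {𝓒 : Finset (Finset α)} {r : ℕ} {A B I X Y : Finset α}

/-- `𝓒` can serve as the collection of circuit-hyperplanes of a sparse paving matroid of positive
rank `r`: its members have `r` elements and pairwise meet in at most `r - 2` of them. -/
structure IsSparsePaving (𝓒 : Finset (Finset α)) (r : ℕ) : Prop where
  pos : 0 < r
  card_eq : ∀ A ∈ 𝓒, #A = r
  card_inter_le : ∀ A ∈ 𝓒, ∀ B ∈ 𝓒, A ≠ B → #(A ∩ B) + 2 ≤ r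

namespace IsSparsePaving

theorem notMem_of_card_lt (h : IsSparsePaving 𝓒 r) (hX : #X < r) : X ∉ 𝓒 :=
  fun hX' ↦ hX.ne (h.card_eq X hX')

theorem card_add_two_le (h : IsSparsePaving 𝓒 r) (hA : A ∈ 𝓒) (hB : B ∈ 𝓒) (hAB : A ≠ B)
    (hXA : X ⊆ A) (hXB : X ⊆ B) : #X + 2 ≤ r :=
  (Nat.add_le_add_right (card_le_card (subset_inter hXA hXB)) 2).trans
    (h.card_inter_le A hA B hB hAB)

theorem exists_insert_notMem (h : IsSparsePaving 𝓒 r) (hI : r ≤ #I + 1) (hX : 1 < #(X \ I)) :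
    ∃ e ∈ X, e ∉ I ∧ insert e I ∉ 𝓒 := by
  obtain ⟨e, he, f, hf, hef⟩ := one_lt_card.1 hX
  rw [mem_sdiff] at he hf
  by_contra! hmem
  have hne : insert e I ≠ insert f I := fun heq ↦ by
    have : e ∈ insert f I := heq ▸ mem_insert_self e I
    grind
  have := h.card_add_two_le (hmem e he.1 he.2) (hmem f hf.1 hf.2) hne (subset_insert _ _)
    (subset_insert _ _)
  omega

theorem exists_subset_card_eq_notMem (h : IsSparsePaving 𝓒 r) (hX : r < #X) :
    ∃ J ⊆ X, #J = r ∧ J ∉ 𝓒 := by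
  have hpos := h.pos
  obtain ⟨I, hIX, hI⟩ := exists_subset_card_eq (show r - 1 ≤ #X by omega)
  have hsdiff : 1 < #(X \ I) := by rw [card_sdiff_of_subset hIX]; omega
  obtain ⟨e, heX, heI, he⟩ := h.exists_insert_notMem (by omega) hsdiff
  refine ⟨insert e I, insert_subset heX hIX, ?_, he⟩
  rw [card_insert_of_notMem heI]
  omega

theorem exists_augment (h : IsSparsePaving 𝓒 r) (hY : #Y ≤ r) (hY' : Y ∉ 𝓒) (hIY : #I < #Y) :
    ∃ e ∈ Y, e ∉ I ∧ insert e I ∉ 𝓒 := by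
  obtain ⟨e, heY, heI⟩ := exists_mem_notMem_of_card_lt_card hIY
  by_cases hI : #I + 1 < r
  · exact ⟨e, heY, heI, h.notMem_of_card_lt (by rwa [card_insert_of_notMem heI])⟩
  by_cases hsub : I ⊆ Y
  · have hYe : insert e I = Y := eq_of_subset_of_card_le (insert_subset heY hsub)
      (by rw [card_insert_of_notMem heI]; omega)
    exact ⟨e, heY, heI, hYe ▸ hY'⟩
  · refine h.exists_insert_notMem (by omega) ?_
    have hinter : #(Y ∩ I) < #I := card_lt_card (by grind)
    have := card_sdiff_add_card_inter Y I
    omega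

/-- The sparse paving matroid of rank `r` with circuit-hyperplanes `𝓒`. -/
def matroid (h : IsSparsePaving 𝓒 r) : Matroid α :=
  (IndepMatroid.ofFinset Set.univ (fun I ↦ #I ≤ r ∧ I ∉ 𝓒)
    ⟨by simp, h.notMem_of_card_lt (by simpa using h.pos)⟩
    (by
      rintro I J ⟨hJ, hJ'⟩ hIJ
      obtain rfl | hssub := hIJ.eq_or_ssubset
      · exact ⟨hJ, hJ'⟩
      · have hlt := (card_lt_card hssub).trans_le hJ
        exact ⟨hlt.le, h.notMem_of_card_lt hlt⟩)
    (by
      rintro I J - ⟨hJ, hJ'⟩ hIJ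
      obtain ⟨e, heJ, heI, he⟩ := h.exists_augment hJ hJ' hIJ
      exact ⟨e, heJ, heI, by rw [card_insert_of_notMem heI]; omega, he⟩)
    (fun _ _ ↦ Set.subset_univ _)).matroid

@[simp]
theorem matroid_ground (h : IsSparsePaving 𝓒 r) : h.matroid.E = Set.univ :=
  rfl

theorem matroid_indep_coe_iff (h : IsSparsePaving 𝓒 r) :
    h.matroid.Indep (I : Set α) ↔ #I ≤ r ∧ I ∉ 𝓒 := by
  simp only [matroid, IndepMatroid.matroid_Indep, IndepMatroid.ofFinset_indep]

instance matroid_rankFinite (h : IsSparsePaving 𝓒 r) : h.matroid.RankFinite := by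
  obtain ⟨B, hB⟩ := h.matroid.exists_isBase
  refine ⟨B, hB, ?_⟩
  by_contra hinf
  obtain ⟨J, hJB, hJ⟩ := Set.Infinite.exists_subset_card_eq hinf (r + 1)
  have := (h.matroid_indep_coe_iff.1 (hB.indep.subset hJB)).1
  omega

end IsSparsePaving

/-- The rank function of the sparse paving matroid of rank `r` with circuit-hyperplanes `𝓒`. -/
def sparsePavingRank (𝓒 : Finset (Finset α)) (r : ℕ) (X : Finset α) : ℕ :=
  if X ∈ 𝓒 then r - 1 else min #X r

namespace IsSparsePaving

theorem exists_indep_card_eq_sparsePavingRank (h : IsSparsePaving 𝓒 r) (X : Finset α) :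
    ∃ I ⊆ X, (#I ≤ r ∧ I ∉ 𝓒) ∧ #I = sparsePavingRank 𝓒 r X := by
  have hpos := h.pos
  rw [sparsePavingRank]
  split_ifs with hX
  · obtain ⟨I, hIX, hI⟩ := exists_subset_card_eq (show r - 1 ≤ #X by have := h.card_eq X hX; omega)
    exact ⟨I, hIX, ⟨by omega, h.notMem_of_card_lt (by omega)⟩, hI⟩
  · obtain hle | hlt := le_or_gt #X r
    · exact ⟨X, Subset.rfl, ⟨hle, hX⟩, (min_eq_left hle).symm⟩
    · obtain ⟨J, hJX, hJ, hJ'⟩ := h.exists_subset_card_eq_notMem hlt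
      exact ⟨J, hJX, ⟨hJ.le, hJ'⟩, by omega⟩

theorem rnk_coe (h : IsSparsePaving 𝓒 r) (X : Finset α) :
    h.matroid.rnk X = sparsePavingRank 𝓒 r X := by
  refine IsGreatest.csSup_eq ⟨?_, ?_⟩
  · obtain ⟨I, hIX, hI, hcard⟩ := h.exists_indep_card_eq_sparsePavingRank X
    exact ⟨I, h.matroid_indep_coe_iff.2 hI, mod_cast hIX, by rw [Set.ncard_coe_finset, hcard]⟩
  · rintro _ ⟨J, hJ, hJX, rfl⟩
    lift J to Finset α using X.finite_toSet.subset hJX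
    obtain ⟨hJr, hJ'⟩ := h.matroid_indep_coe_iff.1 hJ
    rw [Set.ncard_coe_finset, sparsePavingRank]
    rw [coe_subset] at hJX
    split_ifs with hX
    · have := h.card_eq X hX
      have := card_lt_card (hJX.ssubset_of_ne (by grind))
      omega
    · exact le_min (card_le_card hJX) hJr

theorem rnk_of_mem (h : IsSparsePaving 𝓒 r) (hX : X ∈ 𝓒) : h.matroid.rnk X + 1 = r := by
  have := h.pos
  rw [h.rnk_coe, sparsePavingRank, if_pos hX]
  omega

theorem rnk_le_card (h : IsSparsePaving 𝓒 r) (X : Finset α) : h.matroid.rnk X ≤ #X := by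
  rw [h.rnk_coe, sparsePavingRank]
  split_ifs with hX
  · have := h.card_eq X hX
    omega
  · exact min_le_left _ _

theorem rnk_le (h : IsSparsePaving 𝓒 r) (X : Set α) : h.matroid.rnk X ≤ r := by
  obtain ⟨I, hI⟩ := h.matroid.exists_isBasis' X
  obtain ⟨I, rfl⟩ := hI.indep.finite.exists_finset_coe
  rw [← Nat.cast_le (α := ℕ∞), cast_rnk, ← hI.encard_eq_eRk, Set.encard_coe_eq_coe_finsetCard,
    Nat.cast_le]
  exact (h.matroid_indep_coe_iff.1 hI.indep).1

theorem rnk_eq_card_of_rnk_lt (h : IsSparsePaving 𝓒 r) (hX : X ∉ 𝓒) (hlt : h.matroid.rnk X < r) :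
    h.matroid.rnk X = #X := by
  rw [h.rnk_coe, sparsePavingRank, if_neg hX] at hlt ⊢
  omega

theorem union_mem_of_not_isModularPair (h : IsSparsePaving 𝓒 r) {Z : Set α}
    (hZ : ¬ h.matroid.rnk Z ≤ h.matroid.rnk (X ∪ Y)) (hmod : ¬ h.matroid.IsModularPair X Y) :
    X ∪ Y ∈ 𝓒 := by
  by_contra hmem
  obtain hle | hlt := le_or_gt #(X ∪ Y) r
  · have hindep : h.matroid.Indep ↑(X ∪ Y) := h.matroid_indep_coe_iff.2 ⟨hle, hmem⟩
    have hcard {W : Finset α} (hW : W ⊆ X ∪ Y) : h.matroid.rnk W = #W :=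
      rnk_coe_of_indep (hindep.subset (mod_cast hW))
    refine hmod ?_
    rw [IsModularPair, ← coe_union, ← coe_inter, hcard subset_union_left,
      hcard subset_union_right, hcard Subset.rfl,
      hcard (inter_subset_left.trans subset_union_left), card_union_add_card_inter]
  · rw [← coe_union, h.rnk_coe, sparsePavingRank, if_neg hmem, min_eq_right hlt.le] at hZ
    exact hZ (h.rnk_le Z)

theorem matroid_isBase_coe_iff [Fintype α] (h : IsSparsePaving 𝓒 r) (hr : r < Fintype.card α) :
    h.matroid.IsBase (B : Set α) ↔ #B = r ∧ B ∉ 𝓒 := by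
  obtain ⟨J, -, hJ, hJ'⟩ := h.exists_subset_card_eq_notMem (X := univ) (by rwa [card_univ])
  have hJindep : h.matroid.Indep J := h.matroid_indep_coe_iff.2 ⟨hJ.le, hJ'⟩
  refine ⟨fun hB ↦ ?_, fun ⟨hB, hB'⟩ ↦ ?_⟩
  · obtain ⟨hBr, hB'⟩ := h.matroid_indep_coe_iff.1 hB.indep
    refine ⟨hBr.antisymm ?_, hB'⟩
    have hle : J.card ≤ (B : Set α).encard := by
      rw [← Set.encard_coe_eq_coe_finsetCard, hB.encard_eq_eRank]
      exact hJindep.encard_le_eRank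
    rwa [Set.encard_coe_eq_coe_finsetCard, Nat.cast_le, hJ] at hle
  · have hBindep : h.matroid.Indep B := h.matroid_indep_coe_iff.2 ⟨hB.le, hB'⟩
    refine hBindep.isBase_of_maximal fun K hK hBK ↦ ?_
    lift K to Finset α using K.toFinite
    have hKr := (h.matroid_indep_coe_iff.1 hK).1
    rw [coe_subset] at hBK
    exact congrArg _ (eq_of_subset_of_card_le hBK (by omega))

theorem image_compl [Fintype α] {s : ℕ} (h : IsSparsePaving 𝓒 r) (hrs : r + s = Fintype.card α)
    (hs : 0 < s) : IsSparsePaving (𝓒.image compl) s where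
  pos := hs
  card_eq := forall_mem_image.2 fun A hA ↦ by
    rw [card_compl, h.card_eq A hA]
    omega
  card_inter_le := by
    refine forall_mem_image.2 fun A hA ↦ forall_mem_image.2 fun B hB hne ↦ ?_
    have hinter := h.card_inter_le A hA B hB (ne_of_apply_ne compl hne)
    have hunion := card_union_add_card_inter A B
    have hle := card_le_univ (A ∪ B)
    rw [h.card_eq A hA, h.card_eq B hB] at hunion
    rw [← compl_union, card_compl]
    omega

theorem dual_matroid [Fintype α] {s : ℕ} (h : IsSparsePaving 𝓒 r) (hrs : r + s = Fintype.card α)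
    (hs : 0 < s) : h.matroid✶ = (h.image_compl hrs hs).matroid := by
  have hr := h.pos
  refine ext_isBase rfl fun B _ ↦ ?_
  lift B to Finset α using B.toFinite
  have hle := card_le_univ B
  have hmem : B ∈ 𝓒.image compl ↔ Bᶜ ∈ 𝓒 := by
    rw [← compl_injective.mem_finset_image (s := 𝓒), compl_compl]
  rw [dual_isBase_iff, matroid_ground, ← Set.compl_eq_univ_sdiff, ← coe_compl,
    h.matroid_isBase_coe_iff (by omega), (h.image_compl hrs hs).matroid_isBase_coe_iff (by omega),
    card_compl, hmem]
  exact and_congr_left' (by omega)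

end IsSparsePaving

end SparsePaving

section Patterns

variable {α : Type*} [DecidableEq α] {𝓒 : Finset (Finset α)} {r : ℕ}
  {X₁ X₂ X₃ X₄ X₅ : Finset α}

/-- Three distinct circuit-hyperplanes of a sparse paving matroid of rank `r` that share `r - 2`
elements, that is, three hyperplanes through a common coline. -/
def IsPencil (r : ℕ) (A B C : Finset α) : Prop :=
  A ≠ B ∧ A ≠ C ∧ B ≠ C ∧ r ≤ #(A ∩ B ∩ C) + 2

instance (r : ℕ) (A B C : Finset α) : Decidable (IsPencil r A B C) :=
  inferInstanceAs (Decidable (_ ∧ _))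

/-- The incidences between the circuit-hyperplanes `Hᵢⱼ = Xᵢ ∪ Xⱼ` forced by a violation
`X₁, …, X₄` of the Ingleton inequality. -/
def IsIngletonPattern (r : ℕ) (H₁₃ H₁₄ H₂₃ H₂₄ H₃₄ : Finset α) : Prop :=
  IsPencil r H₁₃ H₂₃ H₃₄ ∧ IsPencil r H₁₄ H₂₄ H₃₄ ∧ H₁₃ ≠ H₁₄ ∧
    r ≤ #((H₁₃ ∩ H₁₄) ∪ (H₂₃ ∩ H₂₄))

/-- The incidences between the circuit-hyperplanes `Hᵢⱼ = Xᵢ ∪ Xⱼ` forced by a violation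
`X₁, …, X₅` of the fifth Kinser inequality. -/
def IsKinserPattern (r : ℕ) (H₂₃ H₂₄ H₂₅ H₃₄ H₄₅ : Finset α) : Prop :=
  IsPencil r H₂₄ H₃₄ H₄₅ ∧ H₂₄ \ H₃₄ ⊆ H₂₃ ∩ H₂₅ ∧ H₃₄ \ H₂₄ ⊆ H₂₃ ∧ H₄₅ \ H₂₄ ⊆ H₂₅

/-- Conditions under which five circuit-hyperplanes in a Kinser pattern do not come from a
violation `X₁, …, X₅` of the fifth Kinser inequality. The first condition gives `X₃ = H₂₃ ∩ H₃₄`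
and `X₅ = H₂₅ ∩ H₄₅`, the next two make `X₁ ∪ X₃` and `X₁ ∪ X₅` circuit-hyperplanes, and the last
one then adds `X₁ ∪ X₂` to them, against the violation. -/
structure IsHarmlessPattern (𝓒 : Finset (Finset α)) (r : ℕ) (H₂₃ H₂₄ H₂₅ H₃₄ H₄₅ : Finset α) :
    Prop where
  inter_eq_empty : H₂₃ ∩ H₂₄ ∩ H₂₅ ∩ H₃₄ ∩ H₄₅ = ∅
  lt_card : r < #(H₂₃ ∩ H₃₄ ∪ H₂₅ ∩ H₄₅)
  not_subset : ∀ A ∈ 𝓒, ¬ A ⊆ H₂₃ ∩ H₃₄ ∪ H₂₅ ∩ H₄₅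
  union_mem : ∀ H₁₃ ∈ 𝓒, ∀ H₁₅ ∈ 𝓒, H₂₃ ∩ H₃₄ ⊆ H₁₃ → H₂₅ ∩ H₄₅ ⊆ H₁₅ →
    r ≤ #(H₁₃ ∩ H₁₅ ∪ H₂₃ ∩ H₂₅) → H₁₃ ∩ H₁₅ ∪ H₂₃ ∩ H₂₅ ∈ 𝓒

namespace IsSparsePaving

theorem union_mem_of_not_ingletonIneq₁₃ (h : IsSparsePaving 𝓒 r)
    (hI : ¬ h.matroid.IngletonIneq X₁ X₂ X₃ X₄) : X₁ ∪ X₃ ∈ 𝓒 :=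
  h.union_mem_of_not_isModularPair (mt ingletonIneq_of_rnk₁₃₄_le_rnk₁₃ hI)
    (mt IsModularPair.ingletonIneq₁₃ hI)

theorem union_mem_of_not_ingletonIneq₃₄ (h : IsSparsePaving 𝓒 r)
    (hI : ¬ h.matroid.IngletonIneq X₁ X₂ X₃ X₄) : X₃ ∪ X₄ ∈ 𝓒 :=
  h.union_mem_of_not_isModularPair (mt ingletonIneq_of_rnk₁₂₃₄_le_rnk₃₄ hI)
    (mt IsModularPair.ingletonIneq₃₄ hI)

theorem union_ne_of_not_ingletonIneq₁₃₁₄ (h : IsSparsePaving 𝓒 r)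
    (hI : ¬ h.matroid.IngletonIneq X₁ X₂ X₃ X₄) : X₁ ∪ X₃ ≠ X₁ ∪ X₄ :=
  fun heq ↦ hI <| ingletonIneq_of_rnk₁₃₄_le_rnk₁₃ <|
    rnk_mono _ (mod_cast (by grind : X₁ ∪ X₃ ∪ X₄ ⊆ X₁ ∪ X₃))

theorem union_ne_of_not_ingletonIneq₁₃₃₄ (h : IsSparsePaving 𝓒 r)
    (hI : ¬ h.matroid.IngletonIneq X₁ X₂ X₃ X₄) : X₁ ∪ X₃ ≠ X₃ ∪ X₄ :=
  fun heq ↦ hI <| ingletonIneq_of_rnk₁₃₄_le_rnk₁₃ <|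
    rnk_mono _ (mod_cast (by grind : X₁ ∪ X₃ ∪ X₄ ⊆ X₁ ∪ X₃))

theorem rnk_add_two_le_of_not_ingletonIneq (h : IsSparsePaving 𝓒 r)
    (hI : ¬ h.matroid.IngletonIneq X₁ X₂ X₃ X₄) : h.matroid.rnk X₃ + 2 ≤ r :=
  (Nat.add_le_add_right (h.rnk_le_card X₃) 2).trans <|
    h.card_add_two_le (h.union_mem_of_not_ingletonIneq₁₃ hI) (h.union_mem_of_not_ingletonIneq₃₄ hI)
      (h.union_ne_of_not_ingletonIneq₁₃₃₄ hI) subset_union_right subset_union_left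

theorem le_rnk_of_not_ingletonIneq (h : IsSparsePaving 𝓒 r)
    (hI : ¬ h.matroid.IngletonIneq X₁ X₂ X₃ X₄) :
    r ≤ h.matroid.rnk X₃ + 2 ∧ r ≤ h.matroid.rnk (X₁ ∪ X₂) := by
  have hI' := mt IngletonIneq.swap_right hI
  have hI₂ := mt IngletonIneq.swap_left hI
  have h₁₃ := h.rnk_of_mem (h.union_mem_of_not_ingletonIneq₁₃ hI)
  have h₁₄ := h.rnk_of_mem (h.union_mem_of_not_ingletonIneq₁₃ hI')
  have h₂₃ := h.rnk_of_mem (h.union_mem_of_not_ingletonIneq₁₃ hI₂)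
  have h₂₄ := h.rnk_of_mem (h.union_mem_of_not_ingletonIneq₁₃ (mt IngletonIneq.swap_right hI₂))
  have h₃₄ := h.rnk_of_mem (h.union_mem_of_not_ingletonIneq₃₄ hI)
  have h₃ := h.rnk_add_two_le_of_not_ingletonIneq hI
  have h₄ := h.rnk_add_two_le_of_not_ingletonIneq hI'
  have h₁₂ := h.rnk_le (X₁ ∪ X₂)
  have h₁₃₄ := h.rnk_le (X₁ ∪ X₃ ∪ X₄)
  have h₂₃₄ := h.rnk_le (X₂ ∪ X₃ ∪ X₄)
  simp only [coe_union] at h₁₃ h₁₄ h₂₃ h₂₄ h₃₄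
  unfold IngletonIneq at hI
  omega

theorem isPencil_of_not_ingletonIneq (h : IsSparsePaving 𝓒 r)
    (hI : ¬ h.matroid.IngletonIneq X₁ X₂ X₃ X₄) :
    IsPencil r (X₁ ∪ X₃) (X₂ ∪ X₃) (X₃ ∪ X₄) := by
  have hI₂ := mt IngletonIneq.swap_left hI
  obtain ⟨h₃, h₁₂⟩ := h.le_rnk_of_not_ingletonIneq hI
  refine ⟨fun heq ↦ ?_, h.union_ne_of_not_ingletonIneq₁₃₃₄ hI,
    h.union_ne_of_not_ingletonIneq₁₃₃₄ hI₂, ?_⟩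
  · have hsub : X₁ ∪ X₂ ⊆ X₁ ∪ X₃ := union_subset subset_union_left (heq ▸ subset_union_left)
    have := h.rnk_of_mem (h.union_mem_of_not_ingletonIneq₁₃ hI)
    have := h.matroid.rnk_mono (coe_subset.2 hsub)
    rw [coe_union X₁ X₂] at this
    omega
  · have := card_le_card (by grind : X₃ ⊆ (X₁ ∪ X₃) ∩ (X₂ ∪ X₃) ∩ (X₃ ∪ X₄))
    have := h.rnk_le_card X₃
    omega

theorem isIngletonPattern_of_not_ingletonIneq (h : IsSparsePaving 𝓒 r)
    (hI : ¬ h.matroid.IngletonIneq X₁ X₂ X₃ X₄) :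
    IsIngletonPattern r (X₁ ∪ X₃) (X₁ ∪ X₄) (X₂ ∪ X₃) (X₂ ∪ X₄) (X₃ ∪ X₄) := by
  refine ⟨h.isPencil_of_not_ingletonIneq hI, ?_, h.union_ne_of_not_ingletonIneq₁₃₁₄ hI, ?_⟩
  · rw [union_comm X₃ X₄]
    exact h.isPencil_of_not_ingletonIneq (mt IngletonIneq.swap_right hI)
  · have h₁₂ := (h.le_rnk_of_not_ingletonIneq hI).2
    rw [← coe_union] at h₁₂
    exact (h₁₂.trans (h.rnk_le_card _)).trans (card_le_card (by grind))

theorem isIngleton_of_forall_not_isIngletonPattern [Finite α] (h : IsSparsePaving 𝓒 r)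
    (hpat : ∀ H₁₃ ∈ 𝓒, ∀ H₁₄ ∈ 𝓒, ∀ H₂₃ ∈ 𝓒, ∀ H₂₄ ∈ 𝓒, ∀ H₃₄ ∈ 𝓒,
      ¬ IsIngletonPattern r H₁₃ H₁₄ H₂₃ H₂₄ H₃₄) : h.matroid.IsIngleton := by
  intro X₁ X₂ X₃ X₄
  lift X₁ to Finset α using X₁.toFinite
  lift X₂ to Finset α using X₂.toFinite
  lift X₃ to Finset α using X₃.toFinite
  lift X₄ to Finset α using X₄.toFinite
  by_contra hI
  have hI' := mt IngletonIneq.swap_right hI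
  have hI₂ := mt IngletonIneq.swap_left hI
  exact hpat _ (h.union_mem_of_not_ingletonIneq₁₃ hI) _ (h.union_mem_of_not_ingletonIneq₁₃ hI')
    _ (h.union_mem_of_not_ingletonIneq₁₃ hI₂) _
    (h.union_mem_of_not_ingletonIneq₁₃ (mt IngletonIneq.swap_right hI₂)) _
    (h.union_mem_of_not_ingletonIneq₃₄ hI) (h.isIngletonPattern_of_not_ingletonIneq hI)

theorem union_mem_of_not_kinserFiveIneq₃₄ (h : IsSparsePaving 𝓒 r)
    (hI : h.matroid.IsIngleton) (hK : ¬ h.matroid.KinserFiveIneq X₁ X₂ X₃ X₄ X₅) : X₃ ∪ X₄ ∈ 𝓒 :=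
  h.union_mem_of_not_isModularPair (mt kinserFiveIneq_of_rnk₂₃₄_le_rnk₃₄ hK)
    (mt (IsModularPair.kinserFiveIneq₃₄ (hI X₁ X₂ (X₃ ∩ X₄) X₅)) hK)

theorem union_mem_of_not_kinserFiveIneq₂₃ (h : IsSparsePaving 𝓒 r)
    (hI : h.matroid.IsIngleton) (hK : ¬ h.matroid.KinserFiveIneq X₁ X₂ X₃ X₄ X₅) : X₂ ∪ X₃ ∈ 𝓒 :=
  h.union_mem_of_not_isModularPair (mt (kinserFiveIneq_of_rnk₂₃₄_le_rnk₂₃ (hI X₁ X₂ X₄ X₅)) hK)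
    (mt IsModularPair.kinserFiveIneq₂₃ hK)

theorem union_mem_of_not_kinserFiveIneq₂₄ (h : IsSparsePaving 𝓒 r)
    (hI : h.matroid.IsIngleton) (hK : ¬ h.matroid.KinserFiveIneq X₁ X₂ X₃ X₄ X₅) : X₂ ∪ X₄ ∈ 𝓒 :=
  h.union_mem_of_not_isModularPair (mt (kinserFiveIneq_of_rnk₂₃₄₅_le_rnk₂₄ (hI X₁ X₂ X₃ X₅)) hK)
    (mt IsModularPair.kinserFiveIneq₂₄ hK)

theorem union_ne_of_not_kinserFiveIneq₂₄₃₄ (h : IsSparsePaving 𝓒 r)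
    (hK : ¬ h.matroid.KinserFiveIneq X₁ X₂ X₃ X₄ X₅) : X₂ ∪ X₄ ≠ X₃ ∪ X₄ :=
  fun heq ↦ hK <| kinserFiveIneq_of_rnk₂₃₄_le_rnk₃₄ <|
    rnk_mono _ (mod_cast (by grind : X₂ ∪ X₃ ∪ X₄ ⊆ X₃ ∪ X₄))

theorem union_ne_of_not_kinserFiveIneq₂₃₃₄ (h : IsSparsePaving 𝓒 r)
    (hK : ¬ h.matroid.KinserFiveIneq X₁ X₂ X₃ X₄ X₅) : X₂ ∪ X₃ ≠ X₃ ∪ X₄ :=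
  fun heq ↦ hK <| kinserFiveIneq_of_rnk₂₃₄_le_rnk₃₄ <|
    rnk_mono _ (mod_cast (by grind : X₂ ∪ X₃ ∪ X₄ ⊆ X₃ ∪ X₄))

theorem union_ne_of_not_kinserFiveIneq₃₄₄₅ (h : IsSparsePaving 𝓒 r)
    (hI : h.matroid.IsIngleton) (hK : ¬ h.matroid.KinserFiveIneq X₁ X₂ X₃ X₄ X₅) :
    X₃ ∪ X₄ ≠ X₄ ∪ X₅ :=
  fun heq ↦ hK <| kinserFiveIneq_of_rnk₃₄₅_le_rnk₃₄ (hI X₁ X₂ X₃ X₅) <|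
    rnk_mono _ (mod_cast (by grind : X₃ ∪ X₄ ∪ X₅ ⊆ X₃ ∪ X₄))

theorem le_card_of_not_kinserFiveIneq (h : IsSparsePaving 𝓒 r) (hI : h.matroid.IsIngleton)
    (hK : ¬ h.matroid.KinserFiveIneq X₁ X₂ X₃ X₄ X₅) : r ≤ #X₄ + 2 := by
  have hK' := mt KinserFiveIneq.reverse hK
  have h₂₄ := h.rnk_of_mem (h.union_mem_of_not_kinserFiveIneq₂₄ hI hK)
  have h₃₄ := h.rnk_of_mem (h.union_mem_of_not_kinserFiveIneq₃₄ hI hK)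
  have h₄₅ := h.rnk_of_mem (union_comm X₄ X₅ ▸ h.union_mem_of_not_kinserFiveIneq₃₄ hI hK')
  have h₂₃₄ := h.rnk_le (X₂ ∪ X₃ ∪ X₄)
  have h₂₄₅ := h.rnk_le (X₂ ∪ X₄ ∪ X₅)
  have h₄ := h.rnk_le_card X₄
  have h₃₅ := h.matroid.rnk_mono (X := X₃ ∪ X₅) (Y := X₂ ∪ X₃ ∪ X₅)
  have hI₁₂₃₅ := hI X₁ X₂ X₃ X₅
  simp only [coe_union] at h₂₄ h₃₄ h₄₅
  unfold KinserFiveIneq at hK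
  unfold IngletonIneq at hI₁₂₃₅
  omega

theorem isKinserPattern_of_not_kinserFiveIneq (h : IsSparsePaving 𝓒 r) (hI : h.matroid.IsIngleton)
    (hK : ¬ h.matroid.KinserFiveIneq X₁ X₂ X₃ X₄ X₅) :
    IsKinserPattern r (X₂ ∪ X₃) (X₂ ∪ X₄) (X₂ ∪ X₅) (X₃ ∪ X₄) (X₄ ∪ X₅) := by
  have h₄ := h.le_card_of_not_kinserFiveIneq hI hK
  have hsub : X₄ ⊆ (X₂ ∪ X₄) ∩ (X₃ ∪ X₄) ∩ (X₄ ∪ X₅) := by grind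
  have h₂₄₄₅ := h.union_ne_of_not_kinserFiveIneq₂₄₃₄ (mt KinserFiveIneq.reverse hK)
  refine ⟨⟨h.union_ne_of_not_kinserFiveIneq₂₄₃₄ hK, union_comm X₅ X₄ ▸ h₂₄₄₅,
    h.union_ne_of_not_kinserFiveIneq₃₄₄₅ hI hK,
    h₄.trans (Nat.add_le_add_right (card_le_card hsub) 2)⟩, ?_, ?_, ?_⟩ <;> grind

theorem rnk_add_two_le_of_not_kinserFiveIneq (h : IsSparsePaving 𝓒 r) (hI : h.matroid.IsIngleton)
    (hK : ¬ h.matroid.KinserFiveIneq X₁ X₂ X₃ X₄ X₅) : h.matroid.rnk X₃ + 2 ≤ r :=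
  (Nat.add_le_add_right (h.rnk_le_card X₃) 2).trans <|
    h.card_add_two_le (h.union_mem_of_not_kinserFiveIneq₂₃ hI hK)
      (h.union_mem_of_not_kinserFiveIneq₃₄ hI hK) (h.union_ne_of_not_kinserFiveIneq₂₃₃₄ hK)
      subset_union_right subset_union_left

theorem rnk_add_rnk_add_two_le_of_not_kinserFiveIneq (h : IsSparsePaving 𝓒 r)
    (hI : h.matroid.IsIngleton) (hK : ¬ h.matroid.KinserFiveIneq X₁ X₂ X₃ X₄ X₅) :
    h.matroid.rnk (X₁ ∪ X₃) + h.matroid.rnk (X₁ ∪ X₅) + 2 ≤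
      h.matroid.rnk (X₁ ∪ X₂) + h.matroid.rnk (X₁ ∪ X₃ ∪ X₅) := by
  have hK' := mt KinserFiveIneq.reverse hK
  have m₂₄ := h.union_mem_of_not_kinserFiveIneq₂₄ hI hK
  have m₃₄ := h.union_mem_of_not_kinserFiveIneq₃₄ hI hK
  have h₂₃ := h.rnk_of_mem (h.union_mem_of_not_kinserFiveIneq₂₃ hI hK)
  have h₂₅ := h.rnk_of_mem (h.union_mem_of_not_kinserFiveIneq₂₃ hI hK')
  have h₂₄ := h.rnk_of_mem m₂₄
  have h₃₄ := h.rnk_of_mem m₃₄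
  have h₄₅ := h.rnk_of_mem (union_comm X₅ X₄ ▸ h.union_mem_of_not_kinserFiveIneq₃₄ hI hK')
  have h₃ := h.rnk_add_two_le_of_not_kinserFiveIneq hI hK
  have h₅ := h.rnk_add_two_le_of_not_kinserFiveIneq hI hK'
  have h₄ := h.card_add_two_le m₂₄ m₃₄ (h.union_ne_of_not_kinserFiveIneq₂₄₃₄ hK)
    subset_union_right subset_union_right
  have hcard₄ := h.rnk_le_card X₄
  have h₂₃₄ := h.rnk_le (X₂ ∪ X₃ ∪ X₄)
  have h₂₄₅ := h.rnk_le (X₂ ∪ X₄ ∪ X₅)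
  simp only [coe_union] at h₂₃ h₂₄ h₂₅ h₃₄ h₄₅
  unfold KinserFiveIneq at hK
  omega

theorem inter_eq_empty_of_not_kinserFiveIneq (h : IsSparsePaving 𝓒 r)
    (hI : h.matroid.IsIngleton) (hK : ¬ h.matroid.KinserFiveIneq X₁ X₂ X₃ X₄ X₅)
    (hinter : (X₂ ∪ X₃) ∩ (X₂ ∪ X₄) ∩ (X₂ ∪ X₅) ∩ (X₃ ∪ X₄) ∩ (X₄ ∪ X₅) = ∅) :
    X₂ ∩ X₄ = ∅ ∧ X₃ ∩ X₅ = ∅ := by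
  have hK' := mt KinserFiveIneq.reverse hK
  have hX₄ : (X₃ ∪ X₄) ∩ (X₄ ∪ X₅) = X₄ := by
    refine (eq_of_subset_of_card_le (by grind) ?_).symm
    have := h.card_inter_le _ (h.union_mem_of_not_kinserFiveIneq₃₄ hI hK) _
      (union_comm X₅ X₄ ▸ h.union_mem_of_not_kinserFiveIneq₃₄ hI hK')
      (h.union_ne_of_not_kinserFiveIneq₃₄₄₅ hI hK)
    have := h.le_card_of_not_kinserFiveIneq hI hK
    omega
  constructor <;> rw [← subset_empty, ← hinter] <;> grind

theorem union_mem_of_not_kinserFiveIneq₁₃ (h : IsSparsePaving 𝓒 r)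
    (hI : h.matroid.IsIngleton) (hK : ¬ h.matroid.KinserFiveIneq X₁ X₂ X₃ X₄ X₅)
    (h₂₄ : X₂ ∩ X₄ = ∅) (h₃₅ : X₃ ∩ X₅ = ∅) (hcard : r < #(X₃ ∪ X₅))
    (hsub : ∀ A ∈ 𝓒, ¬ A ⊆ X₃ ∪ X₅) : X₁ ∪ X₃ ∈ 𝓒 := by
  by_contra hmem
  have hviol := h.rnk_add_rnk_add_two_le_of_not_kinserFiveIneq hI hK
  have hlt₁₃ := not_le.1 (mt kinserFiveIneq_of_rnk₁₃₅_le_rnk₁₃ hK)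
  have hlt₁₅ := not_le.1 (mt kinserFiveIneq_of_rnk₁₃₅_le_rnk₁₃ (mt KinserFiveIneq.reverse hK))
  have h₁₃₅ := h.rnk_le (X₁ ∪ X₃ ∪ X₅)
  rw [Set.union_right_comm] at hlt₁₅
  simp only [← coe_union] at hviol hlt₁₃ hlt₁₅ h₁₃₅
  have h₁₃ := h.rnk_eq_card_of_rnk_lt hmem (hlt₁₃.trans_le h₁₃₅)
  have h₁₂ : h.matroid.rnk ↑(X₁ ∪ X₂) ≤ #X₁ + 2 := by
    have := h.rnk_le_card (X₁ ∪ X₂)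
    have := card_union_le X₁ X₂
    have := h.card_eq _ (h.union_mem_of_not_kinserFiveIneq₂₄ hI hK)
    have := card_union_add_card_inter X₂ X₄
    have := h.le_card_of_not_kinserFiveIneq hI hK
    rw [h₂₄, card_empty] at *
    omega
  have hunion : #(X₁ ∪ X₃ ∪ X₅) + #X₁ = #(X₁ ∪ X₃) + #(X₁ ∪ X₅) := by
    rw [← card_union_add_card_inter (X₁ ∪ X₃), ← union_inter_distrib_left, h₃₅, union_empty,
      ← union_union_distrib_left, union_assoc]
  have hle : #(X₃ ∪ X₅) ≤ #(X₁ ∪ X₃ ∪ X₅) := card_le_card (by grind)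
  by_cases hmem₁₅ : X₁ ∪ X₅ ∈ 𝓒
  · have h₁₅ := h.rnk_of_mem hmem₁₅
    have := h.card_eq _ hmem₁₅
    have heq : X₃ ∪ X₅ = X₁ ∪ X₃ ∪ X₅ := eq_of_subset_of_card_le (by grind) (by omega)
    exact hsub _ hmem₁₅ (heq ▸ by grind)
  · have h₁₅ := h.rnk_eq_card_of_rnk_lt hmem₁₅ (hlt₁₅.trans_le h₁₃₅)
    omega

theorem kinserFiveIneq_of_forall_isHarmlessPattern (h : IsSparsePaving 𝓒 r)
    (hI : h.matroid.IsIngleton)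
    (hpat : ∀ H₂₃ ∈ 𝓒, ∀ H₂₄ ∈ 𝓒, ∀ H₂₅ ∈ 𝓒, ∀ H₃₄ ∈ 𝓒, ∀ H₄₅ ∈ 𝓒,
      IsKinserPattern r H₂₃ H₂₄ H₂₅ H₃₄ H₄₅ → IsHarmlessPattern 𝓒 r H₂₃ H₂₄ H₂₅ H₃₄ H₄₅)
    (X₁ X₂ X₃ X₄ X₅ : Finset α) : h.matroid.KinserFiveIneq X₁ X₂ X₃ X₄ X₅ := by
  by_contra hK
  have hK' := mt KinserFiveIneq.reverse hK
  have hharm := hpat _ (h.union_mem_of_not_kinserFiveIneq₂₃ hI hK)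
    _ (h.union_mem_of_not_kinserFiveIneq₂₄ hI hK) _ (h.union_mem_of_not_kinserFiveIneq₂₃ hI hK')
    _ (h.union_mem_of_not_kinserFiveIneq₃₄ hI hK)
    _ (union_comm X₅ X₄ ▸ h.union_mem_of_not_kinserFiveIneq₃₄ hI hK')
    (h.isKinserPattern_of_not_kinserFiveIneq hI hK)
  obtain ⟨h₂₄, h₃₅⟩ := h.inter_eq_empty_of_not_kinserFiveIneq hI hK hharm.inter_eq_empty
  have hX₁ : (X₁ ∪ X₃) ∩ (X₁ ∪ X₅) = X₁ := by
    rw [← union_inter_distrib_left, h₃₅, union_empty]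
  have hX₂ : (X₂ ∪ X₃) ∩ (X₂ ∪ X₅) = X₂ := by
    rw [← union_inter_distrib_left, h₃₅, union_empty]
  have hX₃ : (X₂ ∪ X₃) ∩ (X₃ ∪ X₄) = X₃ := by
    rw [union_comm X₂ X₃, ← union_inter_distrib_left, h₂₄, union_empty]
  have hX₅ : (X₂ ∪ X₅) ∩ (X₄ ∪ X₅) = X₅ := by
    rw [← inter_union_distrib_right, h₂₄, empty_union]
  obtain ⟨-, hcard, hsub, hclose⟩ := hharm
  rw [hX₃, hX₅] at hcard hsub
  rw [hX₂, hX₃, hX₅] at hclose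
  have m₁₃ := h.union_mem_of_not_kinserFiveIneq₁₃ hI hK h₂₄ h₃₅ hcard hsub
  have m₁₅ : X₁ ∪ X₅ ∈ 𝓒 := by
    refine h.union_mem_of_not_kinserFiveIneq₁₃ hI hK' h₂₄ ?_ ?_ ?_
    · rwa [inter_comm]
    · rwa [union_comm]
    · rwa [union_comm]
  have hclose := hclose _ m₁₃ _ m₁₅ subset_union_right subset_union_right
  rw [hX₁] at hclose
  have hviol := h.rnk_add_rnk_add_two_le_of_not_kinserFiveIneq hI hK
  have h₁₃ := h.rnk_of_mem m₁₃
  have h₁₅ := h.rnk_of_mem m₁₅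
  have h₁₃₅ := h.rnk_le (X₁ ∪ X₃ ∪ X₅)
  simp only [← coe_union] at hviol h₁₃₅
  have h₁₂ := h.rnk_le_card (X₁ ∪ X₂)
  have h₁₂' := h.rnk_of_mem (hclose (by omega))
  omega

theorem memKinserClass_five_of_forall_isHarmlessPattern [Finite α] (h : IsSparsePaving 𝓒 r)
    (hI : h.matroid.IsIngleton)
    (hpat : ∀ H₂₃ ∈ 𝓒, ∀ H₂₄ ∈ 𝓒, ∀ H₂₅ ∈ 𝓒, ∀ H₃₄ ∈ 𝓒, ∀ H₄₅ ∈ 𝓒,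
      IsKinserPattern r H₂₃ H₂₄ H₂₅ H₃₄ H₄₅ → IsHarmlessPattern 𝓒 r H₂₃ H₂₄ H₂₅ H₃₄ H₄₅) :
    h.matroid.MemKinserClass 5 := by
  intro X _
  lift X to ℕ → Finset α using fun i ↦ (X i).toFinite
  rw [kinserIneq_five_iff]
  exact h.kinserFiveIneq_of_forall_isHarmlessPattern hI hpat ..

end IsSparsePaving

end Patterns

section Kin

/-- The sets `X₁, …, X₅` that violate the fifth Kinser inequality in the relaxed Kinser matroid
`Kin(5)⁻`. Neighbours in the cycle `X₁`, `X₃`, `X₄`, `X₅` share one of the elements `0, 1, 2, 3`,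
and each of these four sets has one further element of its own. -/
def kinSet : ℕ → Finset (Fin 10)
  | 1 => {0, 1, 4}
  | 2 => {8, 9}
  | 3 => {1, 2, 5}
  | 4 => {2, 3, 6}
  | 5 => {0, 3, 7}
  | _ => ∅

/-- The circuit-hyperplanes of `Kin(5)⁻`: the unions `Xᵢ ∪ Xⱼ` on the right-hand side of the fifth
Kinser inequality. -/
def kinHyperplane : Fin 7 → Finset (Fin 10) :=
  ![kinSet 1 ∪ kinSet 3, kinSet 1 ∪ kinSet 5, kinSet 2 ∪ kinSet 3, kinSet 2 ∪ kinSet 4,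
    kinSet 2 ∪ kinSet 5, kinSet 3 ∪ kinSet 4, kinSet 4 ∪ kinSet 5]

theorem isSparsePaving_kinHyperplane : IsSparsePaving (univ.image kinHyperplane) 5 where
  pos := by decide
  card_eq := by
    simp only [forall_mem_image, mem_univ, true_imp_iff]
    decide +kernel
  card_inter_le := by
    simp only [forall_mem_image, mem_univ, true_imp_iff]
    decide +kernel

/-- The circuit-hyperplanes of the dual of `Kin(5)⁻`. -/
def dualKinHyperplane (i : Fin 7) : Finset (Fin 10) :=
  (kinHyperplane i)ᶜ

theorem isSparsePaving_dualKinHyperplane : IsSparsePaving (univ.image dualKinHyperplane) 5 := by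
  have h := isSparsePaving_kinHyperplane.image_compl (s := 5) rfl (by decide)
  rwa [image_image] at h

theorem dual_matroid_dualKinHyperplane :
    isSparsePaving_dualKinHyperplane.matroid✶ = isSparsePaving_kinHyperplane.matroid := by
  rw [← eq_dual_iff_dual_eq, isSparsePaving_kinHyperplane.dual_matroid (s := 5) rfl (by decide)]
  simp only [image_image]
  rfl

theorem not_isIngletonPattern_dualKinHyperplane (i₁₃ i₁₄ i₂₃ i₂₄ i₃₄ : Fin 7) :
    ¬ IsIngletonPattern 5 (dualKinHyperplane i₁₃) (dualKinHyperplane i₁₄) (dualKinHyperplane i₂₃)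
      (dualKinHyperplane i₂₄) (dualKinHyperplane i₃₄) := by
  rintro ⟨hpencil, hrest⟩
  -- Pencils are rare, so quantifying over the first one separately keeps the search small.
  revert i₁₄ i₂₄
  revert hpencil
  revert i₁₃ i₂₃ i₃₄
  decide +kernel

theorem mem_of_isKinserPattern_dualKinHyperplane (i₂₃ i₂₄ i₂₅ i₃₄ i₄₅ : Fin 7)
    (h : IsKinserPattern 5 (dualKinHyperplane i₂₃) (dualKinHyperplane i₂₄)
      (dualKinHyperplane i₂₅) (dualKinHyperplane i₃₄) (dualKinHyperplane i₄₅)) :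
    (i₂₃, i₂₄, i₂₅, i₃₄, i₄₅) ∈
      ({(0, 5, 6, 2, 3), (6, 5, 0, 3, 2), (5, 6, 1, 3, 4), (1, 6, 5, 4, 3)} : Finset _) := by
  obtain ⟨hpencil, hsub⟩ := h
  revert i₂₃ i₂₅
  revert hpencil
  revert i₂₄ i₃₄ i₄₅
  decide +kernel

theorem isHarmlessPattern_dualKinHyperplane (i₂₃ i₂₄ i₂₅ i₃₄ i₄₅ : Fin 7)
    (h : IsKinserPattern 5 (dualKinHyperplane i₂₃) (dualKinHyperplane i₂₄)
      (dualKinHyperplane i₂₅) (dualKinHyperplane i₃₄) (dualKinHyperplane i₄₅)) :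
    IsHarmlessPattern (univ.image dualKinHyperplane) 5 (dualKinHyperplane i₂₃)
      (dualKinHyperplane i₂₄) (dualKinHyperplane i₂₅) (dualKinHyperplane i₃₄)
      (dualKinHyperplane i₄₅) := by
  have hmem := mem_of_isKinserPattern_dualKinHyperplane _ _ _ _ _ h
  simp only [mem_insert, mem_singleton, Prod.mk.injEq] at hmem
  obtain ⟨rfl, rfl, rfl, rfl, rfl⟩ | ⟨rfl, rfl, rfl, rfl, rfl⟩ | ⟨rfl, rfl, rfl, rfl, rfl⟩ |
    ⟨rfl, rfl, rfl, rfl, rfl⟩ := hmem <;>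
  · refine ⟨by decide +kernel, by decide +kernel, ?_, ?_⟩ <;>
      simp only [forall_mem_image, mem_univ, true_imp_iff] <;>
      decide +kernel

theorem memKinserClass_five_dualKinHyperplane :
    isSparsePaving_dualKinHyperplane.matroid.MemKinserClass 5 := by
  refine isSparsePaving_dualKinHyperplane.memKinserClass_five_of_forall_isHarmlessPattern
    (isSparsePaving_dualKinHyperplane.isIngleton_of_forall_not_isIngletonPattern ?_) ?_
  · simp only [forall_mem_image, mem_univ, true_imp_iff]
    exact not_isIngletonPattern_dualKinHyperplane
  · simp only [forall_mem_image, mem_univ, true_imp_iff]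
    exact fun i₂₃ i₂₄ i₂₅ i₃₄ i₄₅ ↦ isHarmlessPattern_dualKinHyperplane i₂₃ i₂₄ i₂₅ i₃₄ i₄₅

theorem not_memKinserClass_five_kinHyperplane :
    ¬ isSparsePaving_kinHyperplane.matroid.MemKinserClass 5 := by
  intro hmem
  have hK := (kinserIneq_five_iff _).1 (hmem (fun i ↦ kinSet i) fun _ _ ↦ Set.subset_univ _)
  simp only [KinserFiveIneq, ← coe_union, isSparsePaving_kinHyperplane.rnk_coe] at hK
  revert hK
  decide +kernel

end Kin

end Matroid

/-- `K 5 ≠ K 5✶` : there is a finite matroid satisfying the 5th Kinser inequality whose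
dual violates it. -/
theorem Matroid.exists_memKinserClass_five_dual_not :
    ∃ (α : Type) (M : Matroid α), M.Finite ∧ M.MemKinserClass 5 ∧
      ¬ M✶.MemKinserClass 5 := by
  refine ⟨Fin 10, isSparsePaving_dualKinHyperplane.matroid, ⟨Set.toFinite _⟩,
    memKinserClass_five_dualKinHyperplane, ?_⟩
  rw [dual_matroid_dualKinHyperplane]
  exact not_memKinserClass_five_kinHyperplane
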